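/- Let C_1 = lim_{n→∞} f_1(n)^{1/n} and C_2 = lim_{n→∞} f_2(n)^{1/n} be the exponential growth rates of the numbers of 1-convex and 2-convex permutations, respectively. Then 1.5349224995 ≤ C_1 ≤ 1.535014167 and 1.786373489 ≤ C_2 ≤ 1.786434384. -/

import Mathlib

open Filter

/-- A permutation `π` of `[n]` (modeled 0-indexed as `π : Equiv.Perm (Fin n)`) is
`k`-convex if `π(i-1) + π(i+1) - 2π(i) ≤ k` for all interior positions. -/
def IsKConvex (k : ℕ) {n p : ℕ} (f : Fin n → Fin p) : Prop :=
  ∀ i j l : Fin n, (i : ℕ) + 1 = (j : ℕ) → (j : ℕ) + 1 = (l : ℕ) →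
    ((f i : ℕ) : ℤ) + ((f l : ℕ) : ℤ) - 2 * ((f j : ℕ) : ℤ) ≤ (k : ℤ)

/-- `f_k(n)`: the number of `k`-convex permutations of `[n]`. -/
noncomputable def fk (k n : ℕ) : ℕ :=
  Nat.card {π : Equiv.Perm (Fin n) // IsKConvex k ⇑π}

/-!
For `k ≤ 2` the smallest entry of a `k`-convex permutation stands at one of the two ends, so such
permutations are built by repeatedly adding a new minimum at an end. Recording only the length
`p + 1` of the current run of minima added at the same end, the number `x n p` of ways to add `n`
more minima satisfies, for `k ≥ 1`,
`x (n + 1) p = x n (p + 1) + x (n - (p + 1 - k)) (p - k)`.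

If `x n p` were `r ^ n * a p` with `a 0 = 1`, then `a` would satisfy
`a (p + 1) = r * a p - a (p - k) / r ^ (p + 1 - k)`.
When the `a` so defined reaches a nonpositive value, cutting it off there gives a subsolution of the
recurrence, hence `r ≤ C`. When instead it stays positive up to some index `M ≥ k` with
`a M ≤ a (M + 1)`, freezing it from `M` on gives a supersolution, hence `C ≤ r`. Each of the four
numerical bounds is one such evaluation, with at most eight steps.
-/

section Lists

lemma triple_infix_iff {α : Type*} {a b c : α} {l : List α} : [a, b, c] <:+: l ↔
    ∃ i, l[i]? = some a ∧ l[i + 1]? = some b ∧ l[i + 2]? = some c := by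
  rw [List.infix_iff_getElem?]
  constructor
  · rintro ⟨i, -, h⟩
    exact ⟨i, by simpa using h 0, by simpa [add_comm] using h 1, by simpa [add_comm] using h 2⟩
  · rintro ⟨i, ha, hb, hc⟩
    have hlen : i + 2 < l.length := (List.getElem?_eq_some_iff.1 hc).1
    refine ⟨i, by simp only [List.length_cons, List.length_nil]; omega, fun j hj => ?_⟩
    have : j < 3 := hj
    interval_cases j
    exacts [by simpa using ha, by simpa [add_comm] using hb, by simpa [add_comm] using hc]

/-- `k`-convexity of a list, phrased through its windows of length three. -/
def KConvexList (k : ℕ) (l : List ℕ) : Prop :=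
  ∀ ⦃a b c : ℕ⦄, [a, b, c] <:+: l → a + c ≤ 2 * b + k

/-- Raise every entry by one and put a new minimum `0` in front. -/
def consZero (l : List ℕ) : List ℕ := 0 :: l.map (· + 1)

/-- Raise every entry by one and put a new minimum `0` at the end. -/
def snocZero (l : List ℕ) : List ℕ := l.map (· + 1) ++ [0]

/-- The data at the left end of a list that decide whether a new minimum may be put there: the
first entry and the ascent from the first to the second. A descent counts as ascent `0`, by
truncated subtraction; this is harmless because descents never obstruct. -/
def endState : List ℕ → ℕ × ℕ
  | [] => (0, 0)
  | [a] => (a, 0)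
  | a :: b :: _ => (a, b - a)

variable {k n : ℕ} {l l' : List ℕ}

lemma kConvexList_reverse : KConvexList k l.reverse ↔ KConvexList k l := by
  suffices h : ∀ l, KConvexList k l → KConvexList k l.reverse from
    ⟨fun hl => l.reverse_reverse ▸ h _ hl, h l⟩
  intro l hl a b c habc
  have hcba : [c, b, a] <:+: l := by rwa [← List.reverse_infix]
  have := hl hcba
  omega

lemma kConvexList_map_succ : KConvexList k (l.map (· + 1)) ↔ KConvexList k l := by
  constructor
  · intro h a b c habc
    have := h (habc.map (· + 1))
    grind
  · intro h a b c habc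
    obtain ⟨m, hm, hmap⟩ := List.infix_map_iff.1 habc
    match m, hmap with
    | [a', b', c'], hmap =>
      simp only [List.map_cons, List.map_nil, List.cons.injEq, and_true] at hmap
      have := h hm
      omega

lemma kConvexList_cons_cons_cons {a b c : ℕ} :
    KConvexList k (a :: b :: c :: l) ↔ a + c ≤ 2 * b + k ∧ KConvexList k (b :: c :: l) := by
  simp only [KConvexList, List.infix_cons_iff (a := a), List.cons_prefix_cons, List.nil_prefix,
    and_true]
  constructor
  · exact fun h => ⟨h (Or.inl ⟨rfl, rfl, rfl⟩), fun _ _ _ habc => h (Or.inr habc)⟩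
  · rintro ⟨habc, h⟩ _ _ _ (⟨rfl, rfl, rfl⟩ | h')
    exacts [habc, h h']

lemma kConvexList_of_length_le_two (hl : l.length ≤ 2) : KConvexList k l := by
  intro a b c habc
  have := habc.length_le
  grind

lemma kConvexList_consZero :
    KConvexList k (consZero l) ↔ KConvexList k l ∧ (endState l).2 ≤ (endState l).1 + 1 + k := by
  match l with
  | [] => simp [consZero, endState, kConvexList_of_length_le_two]
  | [a] => simp [consZero, endState, kConvexList_of_length_le_two]
  | a :: b :: l =>
    have htail := kConvexList_map_succ (k := k) (l := a :: b :: l)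
    simp only [List.map_cons] at htail
    simp only [consZero, endState, List.map_cons, kConvexList_cons_cons_cons, htail]
    rw [and_comm]
    exact and_congr_right fun _ => by omega

lemma reverse_snocZero : (snocZero l).reverse = consZero l.reverse := by
  simp [snocZero, consZero]

lemma reverse_consZero : (consZero l).reverse = snocZero l.reverse := by
  simp [snocZero, consZero]

lemma kConvexList_snocZero : KConvexList k (snocZero l) ↔
    KConvexList k l ∧ (endState l.reverse).2 ≤ (endState l.reverse).1 + 1 + k := by
  rw [← kConvexList_reverse, reverse_snocZero, kConvexList_consZero, kConvexList_reverse]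

lemma endState_consZero (hl : l ≠ []) : endState (consZero l) = (0, (endState l).1 + 1) := by
  match l, hl with
  | [a], _ | a :: b :: t, _ => simp [consZero, endState]

lemma endState_snocZero (hl : l ≠ []) :
    endState (snocZero l) = ((endState l).1 + 1, (endState l).2) := by
  match l, hl with
  | [a], _ | a :: b :: t, _ => simp [snocZero, endState]

lemma consZero_injective : Function.Injective consZero := fun _ _ h =>
  List.map_injective_iff.2 (add_left_injective 1) (List.tail_eq_of_cons_eq h)

lemma snocZero_injective : Function.Injective snocZero := fun _ _ h =>
  List.map_injective_iff.2 (add_left_injective 1) (List.append_cancel_right h)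

lemma consZero_ne_snocZero (hl : l ≠ []) : consZero l ≠ snocZero l' := by
  cases l' with
  | nil => simpa [consZero, snocZero] using hl
  | cons a t => simp [consZero, snocZero]

lemma consZero_perm_range : (consZero l).Perm (List.range (n + 1)) ↔ l.Perm (List.range n) := by
  rw [consZero, List.range_succ_eq_map, List.perm_cons]
  exact List.map_perm_map_iff (add_left_injective 1)

lemma snocZero_perm_range : (snocZero l).Perm (List.range (n + 1)) ↔ l.Perm (List.range n) := by
  rw [← consZero_perm_range (l := l)]
  exact (List.perm_append_singleton 0 _).congr_left _

lemma exists_eq_map_succ (h : 0 ∉ l) : ∃ m : List ℕ, l = m.map (· + 1) := by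
  refine ⟨l.map (· - 1), ?_⟩
  rw [List.map_map, List.map_congr_left (g := id), List.map_id]
  intro a ha
  exact Nat.succ_pred (ne_of_mem_of_not_mem ha h)

-- In the interior, `0` would have two distinct positive neighbours, whose sum is at least `3`.
lemma exists_eq_consZero_or_snocZero (hk : k ≤ 2) (hnd : l.Nodup) (h0 : 0 ∈ l)
    (hl : KConvexList k l) : ∃ m, l = consZero m ∨ l = snocZero m := by
  obtain ⟨A, B, rfl⟩ := List.append_of_mem h0
  obtain ⟨hA, hB⟩ : 0 ∉ A ∧ 0 ∉ B := by grind
  rcases A.eq_nil_or_concat with rfl | ⟨A, a, rfl⟩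
  · obtain ⟨m, rfl⟩ := exists_eq_map_succ hB
    exact ⟨m, Or.inl rfl⟩
  rcases B with - | ⟨b, B⟩
  · obtain ⟨m, hm⟩ := exists_eq_map_succ hA
    exact ⟨m, Or.inr (by rw [hm, snocZero])⟩
  · have hab : a + b ≤ k := by simpa using hl (a := a) (b := 0) (c := b) ⟨A, B, by simp⟩
    grind

end Lists

section Counting

variable {k n : ℕ}

open Classical in
/-- The `k`-convex arrangements of `0, …, n - 1`, as lists. -/
noncomputable def kConvexLists (k n : ℕ) : Finset (List ℕ) :=
  (List.range n).permutations.toFinset.filter (KConvexList k)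

lemma mem_kConvexLists {l : List ℕ} :
    l ∈ kConvexLists k n ↔ l.Perm (List.range n) ∧ KConvexList k l := by
  simp [kConvexLists]

lemma ne_nil_of_mem_kConvexLists {l : List ℕ} (hl : l ∈ kConvexLists k (n + 1)) : l ≠ [] := by
  rintro rfl
  simpa using (mem_kConvexLists.1 hl).1.length_eq

lemma kConvexLists_one : kConvexLists k 1 = {[0]} := by
  ext l
  simp only [mem_kConvexLists, List.range_one, List.perm_singleton, Finset.mem_singleton,
    and_iff_left_iff_imp]
  rintro rfl
  exact kConvexList_of_length_le_two (by simp)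

lemma kConvexLists_succ (hk : k ≤ 2) : kConvexLists k (n + 1) =
    {l ∈ kConvexLists k n | (endState l).2 ≤ (endState l).1 + 1 + k}.image consZero ∪
    {l ∈ kConvexLists k n |
      (endState l.reverse).2 ≤ (endState l.reverse).1 + 1 + k}.image snocZero := by
  ext l
  simp only [Finset.mem_union, Finset.mem_image, Finset.mem_filter, mem_kConvexLists]
  constructor
  · rintro ⟨hperm, hconv⟩
    obtain ⟨m, rfl | rfl⟩ := exists_eq_consZero_or_snocZero hk
      (hperm.nodup_iff.2 List.nodup_range) (hperm.mem_iff.2 (by simp)) hconv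
    · rw [consZero_perm_range, kConvexList_consZero] at *
      exact Or.inl ⟨m, by tauto, rfl⟩
    · rw [snocZero_perm_range, kConvexList_snocZero] at *
      exact Or.inr ⟨m, by tauto, rfl⟩
  · rintro (⟨m, hm, rfl⟩ | ⟨m, hm, rfl⟩)
    · rw [consZero_perm_range, kConvexList_consZero]
      tauto
    · rw [snocZero_perm_range, kConvexList_snocZero]
      tauto

lemma sum_kConvexLists_add_two {M : Type*} [AddCommMonoid M] (hk : k ≤ 2) (φ : List ℕ → M) :
    ∑ l ∈ kConvexLists k (n + 2), φ l = ∑ l ∈ kConvexLists k (n + 1),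
      ((if (endState l).2 ≤ (endState l).1 + 1 + k then φ (consZero l) else 0) +
        (if (endState l.reverse).2 ≤ (endState l.reverse).1 + 1 + k
          then φ (snocZero l) else 0)) := by
  rw [kConvexLists_succ hk, Finset.sum_union, Finset.sum_image consZero_injective.injOn,
    Finset.sum_image snocZero_injective.injOn, Finset.sum_filter, Finset.sum_filter,
    Finset.sum_add_distrib]
  simp only [Finset.disjoint_left, Finset.mem_image, Finset.mem_filter]
  rintro _ ⟨l, ⟨hl, -⟩, rfl⟩ ⟨l', -, h⟩
  exact consZero_ne_snocZero (ne_nil_of_mem_kConvexLists hl) h.symm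

/-- The number of ways to add `n` new minima, one after the other, to a `k`-convex list whose two
ends are in the states `s` and `t` (as in `endState`). -/
def extCount (k : ℕ) : ℕ → ℕ × ℕ → ℕ × ℕ → ℕ
  | 0, _, _ => 1
  | n + 1, s, t =>
    (if s.2 ≤ s.1 + 1 + k then extCount k n (0, s.1 + 1) (t.1 + 1, t.2) else 0) +
    (if t.2 ≤ t.1 + 1 + k then extCount k n (s.1 + 1, s.2) (0, t.1 + 1) else 0)

lemma card_kConvexLists_add (hk : k ≤ 2) (m n : ℕ) : (kConvexLists k (n + 1 + m)).card =
    ∑ l ∈ kConvexLists k (n + 1), extCount k m (endState l) (endState l.reverse) := by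
  induction m generalizing n with
  | zero => simp [extCount]
  | succ m ih =>
    rw [show n + 1 + (m + 1) = n + 1 + 1 + m by omega, ih, sum_kConvexLists_add_two hk]
    refine Finset.sum_congr rfl fun l hl => ?_
    have hl := ne_nil_of_mem_kConvexLists hl
    have hr : l.reverse ≠ [] := by simpa using hl
    rw [extCount, endState_consZero hl, endState_snocZero hl, reverse_consZero, reverse_snocZero,
      endState_consZero hr, endState_snocZero hr]

lemma card_kConvexLists_succ (hk : k ≤ 2) (n : ℕ) :
    (kConvexLists k (n + 1)).card = extCount k n (0, 0) (0, 0) := by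
  have h := card_kConvexLists_add hk n 0
  rwa [kConvexLists_one, Finset.sum_singleton, add_comm (0 + 1)] at h

lemma isKConvex_iff_kConvexList_ofFn {p : ℕ} (f : Fin n → Fin p) :
    IsKConvex k f ↔ KConvexList k (List.ofFn fun i => (f i : ℕ)) := by
  simp only [KConvexList, triple_infix_iff, List.getElem?_eq_some_iff, List.length_ofFn,
    List.getElem_ofFn]
  constructor
  · rintro hf _ _ _ ⟨i, ⟨hi, rfl⟩, ⟨hj, rfl⟩, ⟨hm, rfl⟩⟩
    have := hf ⟨i, hi⟩ ⟨i + 1, hj⟩ ⟨i + 2, hm⟩ rfl rfl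
    omega
  · rintro hl ⟨i, hi⟩ ⟨j, hj⟩ ⟨m, hm⟩ hij hjm
    obtain rfl : j = i + 1 := hij.symm
    obtain rfl : m = i + 2 := hjm.symm
    have := hl ⟨i, ⟨hi, rfl⟩, ⟨hj, rfl⟩, ⟨hm, rfl⟩⟩
    omega

lemma ofFn_perm_injective (n : ℕ) : Function.Injective
    fun π : Equiv.Perm (Fin n) => List.ofFn fun i => (π i : ℕ) := fun _ _ h =>
  Equiv.ext fun i => Fin.ext (congrFun (List.ofFn_injective h) i)

lemma ofFn_perm_perm_range (π : Equiv.Perm (Fin n)) :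
    (List.ofFn fun i => (π i : ℕ)).Perm (List.range n) := by
  have hid : List.ofFn (fun i : Fin n => (i : ℕ)) = List.range n := by
    simp [List.ofFn_eq_map]
  exact hid ▸ π.ofFn_comp_perm (fun i : Fin n => (i : ℕ))

lemma image_ofFn_perm (n : ℕ) :
    Finset.univ.image (fun π : Equiv.Perm (Fin n) => List.ofFn fun i => (π i : ℕ)) =
      (List.range n).permutations.toFinset := by
  refine Finset.eq_of_subset_of_card_le (fun l hl => ?_) ?_
  · obtain ⟨π, -, rfl⟩ := Finset.mem_image.1 hl
    simpa using ofFn_perm_perm_range π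
  · rw [Finset.card_image_of_injective _ (ofFn_perm_injective n),
      List.toFinset_card_of_nodup (List.nodup_permutations _ List.nodup_range)]
    simp [List.length_permutations, Fintype.card_perm]

lemma fk_eq_card_kConvexLists (k n : ℕ) : fk k n = (kConvexLists k n).card := by
  classical
  rw [fk, Nat.card_eq_fintype_card, Fintype.card_subtype, kConvexLists, ← image_ofFn_perm,
    Finset.filter_image, Finset.card_image_of_injective _ (ofFn_perm_injective n)]
  simp only [isKConvex_iff_kConvexList_ofFn]

end Counting

section RunCount

variable {k : ℕ}

lemma extCount_comm (n : ℕ) (s t : ℕ × ℕ) : extCount k n s t = extCount k n t s := by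
  induction n generalizing s t with
  | zero => rfl
  | succ n ih => rw [extCount, extCount, ih (0, s.1 + 1), ih (s.1 + 1, s.2), add_comm]

-- The condition only gets weaker while minima are added at the other end, and adding one at this
-- end replaces the ascent.
lemma extCount_eq_of_ascent_le {v h : ℕ} (hv : h ≤ v + 1 + k) (n : ℕ) (t : ℕ × ℕ) :
    extCount k n (v, h) t = extCount k n (v, 0) t := by
  induction n generalizing v t with
  | zero => rfl
  | succ n ih => simp only [extCount, hv, zero_le, ih (by omega : h ≤ v + 1 + 1 + k)]

lemma extCount_blocked (n j q : ℕ) :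
    extCount k n (0, 0) (q, q + 1 + k + j) = extCount k (n - j) (0, 0) (q + j, 0) := by
  induction j generalizing n q with
  | zero =>
    rw [extCount_comm, add_zero, extCount_eq_of_ascent_le le_rfl, extCount_comm, Nat.sub_zero,
      add_zero]
  | succ j ih =>
    cases n with
    | zero => simp only [zero_tsub, extCount]
    | succ n =>
      rw [extCount, if_pos (Nat.zero_le _), if_neg (by simp), add_zero, zero_add,
        extCount_eq_of_ascent_le (by omega), show q + 1 + k + (j + 1) = q + 1 + 1 + k + j by omega,
        ih, Nat.add_sub_add_right, add_right_comm, add_assoc]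

/-- The number of ways to add `n` new minima to a `k`-convex list to one end of which a run of
exactly `p + 1` minima has just been added, the minimum before that having been added to the
opposite end. Assuming that neither end is obstructed, both ascents may be recorded as `0`. -/
def runCount (k n p : ℕ) : ℕ := extCount k n (0, 0) (p + 1, 0)

lemma runCount_zero (p : ℕ) : runCount k 0 p = 1 := rfl

lemma extCount_switch (hk : 1 ≤ k) (n p : ℕ) :
    extCount k n (0, p + 2) (1, 0) = runCount k (n - (p + 1 - k)) (p - k) := by
  rcases lt_or_ge p k with hp | hp
  · rw [extCount_eq_of_ascent_le (by omega), runCount, Nat.sub_eq_zero_of_le hp,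
      Nat.sub_eq_zero_of_le hp.le, Nat.sub_zero]
  cases n with
  | zero => rw [zero_tsub, runCount_zero, extCount]
  | succ n =>
    rw [extCount, if_neg (by simp; omega), if_pos (by simp), zero_add, extCount_comm,
      extCount_eq_of_ascent_le (by omega), show p + 2 = 0 + 1 + 1 + k + (p - k) by omega,
      extCount_blocked, runCount, show n + 1 - (p + 1 - k) = n - (p - k) by omega,
      show 0 + 1 + (p - k) = p - k + 1 by omega]

-- The next minimum goes either to the same end or to the opposite one. In the second case
-- it creates an ascent `p + 2` there, which blocks that end for the next `p + 1 - k` steps; all of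
-- these are then forced.
lemma runCount_succ (hk : 1 ≤ k) (n p : ℕ) :
    runCount k (n + 1) p = runCount k n (p + 1) + runCount k (n - (p + 1 - k)) (p - k) := by
  rw [runCount, extCount, if_pos (Nat.zero_le _), if_pos (Nat.zero_le _), zero_add,
    extCount_eq_of_ascent_le (by omega), extCount_comm n (1, 0), extCount_switch hk]
  rfl

lemma fk_add_two (hk : k ≤ 2) (n : ℕ) : fk k (n + 2) = 2 * runCount k n 0 := by
  rw [fk_eq_card_kConvexLists, card_kConvexLists_succ hk, extCount, extCount_comm n (0 + 1, 0),
    if_pos (Nat.zero_le _), extCount_eq_of_ascent_le (by omega), two_mul]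
  rfl

end RunCount

section EigenSeq

variable {k M : ℕ} {c r : ℝ} {w : ℕ → ℝ}

-- The maximum with `c` accounts for the truncated subtraction in `runCount_succ`.
lemma mul_runCount_le_of_supersolution (hk : 1 ≤ k) (hc : 0 ≤ c) (hr : 1 ≤ r) (hw : ∀ p, c ≤ w p)
    (hsuper : ∀ p, w (p + 1) + max c (w (p - k) / r ^ (p + 1 - k)) ≤ r * w p) (n p : ℕ) :
    c * runCount k n p ≤ r ^ n * w p := by
  induction n using Nat.strong_induction_on generalizing p with | _ n ih
  cases n with
  | zero => simpa [runCount_zero] using hw p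
  | succ n =>
    have hswitch : c * runCount k (n - (p + 1 - k)) (p - k) ≤
        r ^ n * max c (w (p - k) / r ^ (p + 1 - k)) := by
      rcases le_or_gt (p + 1 - k) n with hn | hn
      · calc c * runCount k (n - (p + 1 - k)) (p - k)
            ≤ r ^ (n - (p + 1 - k)) * w (p - k) := ih _ (by omega) _
          _ = r ^ n * (w (p - k) / r ^ (p + 1 - k)) := by
            rw [pow_sub₀ _ (by positivity) hn]
            ring
          _ ≤ _ := by gcongr; exact le_max_right _ _
      · rw [Nat.sub_eq_zero_of_le hn.le, runCount_zero, Nat.cast_one, mul_one]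
        exact (le_max_left _ _).trans
          (le_mul_of_one_le_left (hc.trans (le_max_left _ _)) (one_le_pow₀ hr))
    calc c * runCount k (n + 1) p
        = c * runCount k n (p + 1) + c * runCount k (n - (p + 1 - k)) (p - k) := by
          rw [runCount_succ hk]
          push_cast
          ring
      _ ≤ r ^ n * w (p + 1) + r ^ n * max c (w (p - k) / r ^ (p + 1 - k)) :=
          add_le_add (ih n n.lt_succ_self _) hswitch
      _ = r ^ n * (w (p + 1) + max c (w (p - k) / r ^ (p + 1 - k))) := by ring
      _ ≤ r ^ n * (r * w p) := by gcongr; exact hsuper p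
      _ = r ^ (n + 1) * w p := by ring

lemma le_mul_runCount_of_subsolution (hk : 1 ≤ k) (hr : 1 ≤ r) (hw₀ : ∀ p, 0 ≤ w p)
    (hw : ∀ p, w p ≤ c) (hsub : ∀ p, r * w p ≤ w (p + 1) + w (p - k) / r ^ (p + 1 - k))
    (n p : ℕ) : r ^ n * w p ≤ c * runCount k n p := by
  induction n using Nat.strong_induction_on generalizing p with | _ n ih
  cases n with
  | zero => simpa [runCount_zero] using hw p
  | succ n =>
    have hswitch : r ^ n * (w (p - k) / r ^ (p + 1 - k)) ≤
        c * runCount k (n - (p + 1 - k)) (p - k) := by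
      rcases le_or_gt (p + 1 - k) n with hn | hn
      · calc r ^ n * (w (p - k) / r ^ (p + 1 - k))
            = r ^ (n - (p + 1 - k)) * w (p - k) := by
              rw [pow_sub₀ _ (by positivity) hn]
              ring
          _ ≤ _ := ih _ (by omega) _
      · rw [Nat.sub_eq_zero_of_le hn.le, runCount_zero, Nat.cast_one, mul_one]
        calc r ^ n * (w (p - k) / r ^ (p + 1 - k))
            = w (p - k) * (r ^ n / r ^ (p + 1 - k)) := by ring
          _ ≤ w (p - k) :=
            mul_le_of_le_one_right (hw₀ _)
              (div_le_one_of_le₀ (pow_le_pow_right₀ hr hn.le) (by positivity))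
          _ ≤ c := hw _
    calc r ^ (n + 1) * w p = r ^ n * (r * w p) := by ring
      _ ≤ r ^ n * (w (p + 1) + w (p - k) / r ^ (p + 1 - k)) := by gcongr; exact hsub p
      _ = r ^ n * w (p + 1) + r ^ n * (w (p - k) / r ^ (p + 1 - k)) := by ring
      _ ≤ c * runCount k n (p + 1) + c * runCount k (n - (p + 1 - k)) (p - k) :=
          add_le_add (ih n n.lt_succ_self _) hswitch
      _ = c * runCount k (n + 1) p := by
          rw [runCount_succ hk]
          push_cast
          ring

/-- The sequence `a` with `a 0 = 1` for which `r ^ n * a p` satisfies the recurrence of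
`runCount k n p`, truncation aside. -/
noncomputable def eigenSeq (k : ℕ) (r : ℝ) : ℕ → ℝ
  | 0 => 1
  | p + 1 => r * eigenSeq k r p - eigenSeq k r (p - k) / r ^ (p + 1 - k)

lemma eigenSeq_succ_add (k : ℕ) (r : ℝ) (p : ℕ) :
    eigenSeq k r (p + 1) + eigenSeq k r (p - k) / r ^ (p + 1 - k) = r * eigenSeq k r p := by
  rw [eigenSeq, sub_add_cancel]

lemma eigenSeq_div_pow_antitoneOn (hr : 0 < r) (hpos : ∀ p < M, 0 ≤ eigenSeq k r p) :
    AntitoneOn (fun p => eigenSeq k r p / r ^ (p + 1)) (Set.Iic M) := by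
  refine antitoneOn_of_succ_le Set.ordConnected_Iic fun p _ _ (hp : p < M) => ?_
  have := hpos (p - k) (by omega)
  rw [Nat.succ_eq_succ, Nat.succ_eq_add_one, pow_succ r (p + 1), div_mul_eq_div_div_swap]
  gcongr
  rw [div_le_iff₀' hr, ← eigenSeq_succ_add]
  exact le_add_of_nonneg_right (by positivity)

lemma eigenSeq_le_pow (hr : 0 < r) (hpos : ∀ p < M, 0 ≤ eigenSeq k r p) {p : ℕ} (hp : p ≤ M) :
    eigenSeq k r p ≤ r ^ p := by
  have h := eigenSeq_div_pow_antitoneOn hr hpos (Nat.zero_le M) hp (Nat.zero_le p)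
  simpa [eigenSeq, pow_succ, div_le_iff₀ (show 0 < r ^ p * r by positivity), field] using h

lemma max_eigenSeq_min_div_le (hkM : k ≤ M) (hr : 1 ≤ r) (hpos : ∀ p ≤ M, 0 ≤ eigenSeq k r p)
    (p : ℕ) : max (eigenSeq k r M / r ^ (M + 1)) (eigenSeq k r (min (p - k) M) / r ^ (p + 1 - k)) ≤
      eigenSeq k r (min p M - k) / r ^ (min p M + 1 - k) := by
  have hanti := eigenSeq_div_pow_antitoneOn (by positivity) fun p hp => hpos p hp.le
  have hweaken : ∀ {q i j}, q ≤ M → i ≤ j → eigenSeq k r q / r ^ j ≤ eigenSeq k r q / r ^ i := by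
    intro q i j hq hij
    have := hpos q hq
    gcongr
  refine max_le ?_ ?_
  · have hq : min p M - k ≤ M := by omega
    exact (hanti hq Set.self_mem_Iic hq).trans (hweaken hq (by omega))
  rcases le_total p M with hp | hp
  · rw [min_eq_left hp, min_eq_left (by omega)]
  · rw [min_eq_right hp, Nat.sub_add_comm hkM]
    have hq : min (p - k) M ≤ M := min_le_right _ _
    exact (hweaken hq (by omega)).trans (hanti (Nat.sub_le M k) hq (by omega))

lemma exists_mul_runCount_le_pow (hk : 1 ≤ k) (hkM : k ≤ M) (hr : 1 ≤ r)
    (hpos : ∀ p ≤ M, 0 < eigenSeq k r p) (hM : eigenSeq k r M ≤ eigenSeq k r (M + 1)) :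
    ∃ c > 0, ∀ n, c * runCount k n 0 ≤ r ^ n := by
  have hpos₀ : ∀ p ≤ M, 0 ≤ eigenSeq k r p := fun p hp => (hpos p hp).le
  have hc : 0 < eigenSeq k r M / r ^ (M + 1) := div_pos (hpos M le_rfl) (by positivity)
  refine ⟨_, hc, fun n => ?_⟩
  have := mul_runCount_le_of_supersolution (w := fun p => eigenSeq k r (min p M)) hk hc.le hr ?_ ?_
    n 0
  · simpa [eigenSeq] using this
  · intro p
    have hp : min p M ≤ M := min_le_right _ _
    calc eigenSeq k r M / r ^ (M + 1)
        ≤ eigenSeq k r (min p M) / r ^ (min p M + 1) :=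
          eigenSeq_div_pow_antitoneOn (by positivity) (fun p hp => hpos₀ p hp.le) hp
            Set.self_mem_Iic hp
      _ ≤ eigenSeq k r (min p M) := div_le_self (hpos₀ _ hp) (one_le_pow₀ hr)
  · intro p
    have hnext : eigenSeq k r (min (p + 1) M) ≤ eigenSeq k r (min p M + 1) := by
      rcases lt_or_ge p M with hp | hp
      · rw [min_eq_left hp.le, min_eq_left (Nat.succ_le_of_lt hp)]
      · rwa [min_eq_right hp, min_eq_right (by omega)]
    rw [← eigenSeq_succ_add]
    exact add_le_add hnext (max_eigenSeq_min_div_le hkM hr hpos₀ p)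

lemma exists_pow_le_mul_runCount (hk : 1 ≤ k) (hr : 1 ≤ r) (hex : ∃ p, eigenSeq k r p ≤ 0) :
    ∃ c > 0, ∀ n, r ^ n ≤ c * runCount k n 0 := by
  classical
  obtain ⟨M, hM, hpos⟩ : ∃ M, eigenSeq k r M ≤ 0 ∧ ∀ p < M, 0 ≤ eigenSeq k r p :=
    ⟨Nat.find hex, Nat.find_spec hex, fun p hp => (not_le.1 (Nat.find_min hex hp)).le⟩
  have hM₀ : 0 < M := by
    refine Nat.pos_of_ne_zero ?_
    rintro rfl
    rw [eigenSeq] at hM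
    exact one_pos.not_ge hM
  let w : ℕ → ℝ := fun p => if p < M then eigenSeq k r p else 0
  have hw : ∀ p < M, w p = eigenSeq k r p := fun p hp => if_pos hp
  have hw_zero : ∀ p ≥ M, w p = 0 := fun p hp => if_neg hp.not_gt
  have hw₀ : ∀ p, 0 ≤ w p := fun p => by
    rcases lt_or_ge p M with hp | hp
    exacts [hw p hp ▸ hpos p hp, (hw_zero p hp).ge]
  refine ⟨r ^ M, by positivity, fun n => ?_⟩
  have := le_mul_runCount_of_subsolution (c := r ^ M) hk hr hw₀ ?_ ?_ n 0
  · simpa [hw 0 hM₀, eigenSeq] using this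
  · intro p
    rcases lt_or_ge p M with hp | hp
    · rw [hw p hp]
      exact (eigenSeq_le_pow (by positivity) hpos hp.le).trans (pow_le_pow_right₀ hr hp.le)
    · rw [hw_zero p hp]
      positivity
  · intro p
    rcases lt_or_ge p M with hp | hp
    · have hnext : eigenSeq k r (p + 1) ≤ w (p + 1) := by
        rcases Nat.lt_or_eq_of_le (Nat.succ_le_of_lt hp) with h | h
        · exact (hw _ h).ge
        · exact (h ▸ hM).trans (hw₀ _)
      rw [hw p hp, hw (p - k) (by omega), ← eigenSeq_succ_add]
      gcongr
    · rw [hw_zero p hp, mul_zero]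
      exact add_nonneg (hw₀ _) (div_nonneg (hw₀ _) (by positivity))

end EigenSeq

section GrowthRate

variable {A C r : ℝ} {k M : ℕ}

lemma tendsto_const_mul_pow_root (hA : 0 < A) (hr : 0 ≤ r) :
    Tendsto (fun n : ℕ => (A * r ^ n) ^ (1 / (n : ℝ))) atTop (nhds r) := by
  have hroot : Tendsto (fun n : ℕ => A ^ (1 / (n : ℝ)) * r) atTop (nhds (A ^ (0 : ℝ) * r)) :=
    (((Real.continuous_const_rpow hA.ne').tendsto 0).comp
      tendsto_one_div_atTop_nhds_zero_nat).mul_const r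
  rw [Real.rpow_zero, one_mul] at hroot
  refine hroot.congr' ?_
  filter_upwards [eventually_ne_atTop 0] with n hn
  rw [Real.mul_rpow hA.le (by positivity), one_div, Real.pow_rpow_inv_natCast hr hn]

lemma le_of_tendsto_root_of_le_const_mul_pow {f : ℕ → ℝ} (hA : 0 < A) (hr : 0 ≤ r)
    (hf₀ : ∀ n, 0 ≤ f n) (hf : ∀ᶠ n in atTop, f n ≤ A * r ^ n)
    (hC : Tendsto (fun n : ℕ => f n ^ (1 / (n : ℝ))) atTop (nhds C)) : C ≤ r := by
  refine le_of_tendsto_of_tendsto hC (tendsto_const_mul_pow_root hA hr) ?_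
  filter_upwards [hf] with n hn
  exact Real.rpow_le_rpow (hf₀ n) hn (by positivity)

lemma ge_of_tendsto_root_of_const_mul_pow_le {f : ℕ → ℝ} (hA : 0 < A) (hr : 0 ≤ r)
    (hf : ∀ᶠ n in atTop, A * r ^ n ≤ f n)
    (hC : Tendsto (fun n : ℕ => f n ^ (1 / (n : ℝ))) atTop (nhds C)) : r ≤ C := by
  refine le_of_tendsto_of_tendsto (tendsto_const_mul_pow_root hA hr) hC ?_
  filter_upwards [hf] with n hn
  exact Real.rpow_le_rpow (by positivity) hn (by positivity)

lemma growthRate_le_of_eigenSeq (hk₁ : 1 ≤ k) (hk₂ : k ≤ 2) (hkM : k ≤ M) (hr : 1 ≤ r)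
    (hpos : ∀ p ≤ M, 0 < eigenSeq k r p) (hM : eigenSeq k r M ≤ eigenSeq k r (M + 1))
    (hC : Tendsto (fun n : ℕ => (fk k n : ℝ) ^ (1 / (n : ℝ))) atTop (nhds C)) : C ≤ r := by
  have hr₀ : 0 < r := by positivity
  obtain ⟨c, hc, hcount⟩ := exists_mul_runCount_le_pow hk₁ hkM hr hpos hM
  refine le_of_tendsto_root_of_le_const_mul_pow (A := 2 / (c * r ^ 2)) (by positivity) hr₀.le
    (fun n => Nat.cast_nonneg _) ?_ hC
  refine eventually_atTop.2 ⟨2, fun m hm => ?_⟩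
  obtain ⟨n, rfl⟩ := Nat.exists_eq_add_of_le' hm
  calc (fk k (n + 2) : ℝ) = 2 / c * (c * runCount k n 0) := by
        rw [fk_add_two hk₂]
        push_cast
        field_simp
    _ ≤ 2 / c * r ^ n := by gcongr; exact hcount n
    _ = 2 / (c * r ^ 2) * r ^ (n + 2) := by field_simp; ring

lemma le_growthRate_of_eigenSeq (hk₁ : 1 ≤ k) (hk₂ : k ≤ 2) (hr : 1 ≤ r)
    (hex : ∃ p, eigenSeq k r p ≤ 0)
    (hC : Tendsto (fun n : ℕ => (fk k n : ℝ) ^ (1 / (n : ℝ))) atTop (nhds C)) : r ≤ C := by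
  have hr₀ : 0 < r := by positivity
  obtain ⟨c, hc, hcount⟩ := exists_pow_le_mul_runCount hk₁ hr hex
  refine ge_of_tendsto_root_of_const_mul_pow_le (A := 2 / (c * r ^ 2)) (by positivity) hr₀.le ?_ hC
  refine eventually_atTop.2 ⟨2, fun m hm => ?_⟩
  obtain ⟨n, rfl⟩ := Nat.exists_eq_add_of_le' hm
  calc 2 / (c * r ^ 2) * r ^ (n + 2) = 2 / c * r ^ n := by field_simp; ring
    _ ≤ 2 / c * (c * runCount k n 0) := by gcongr; exact hcount n
    _ = fk k (n + 2) := by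
        rw [fk_add_two hk₂]
        push_cast
        field_simp

end GrowthRate

/-- if `C₁ = lim_{n→∞} f_1(n)^(1/n)` and `C₂ = lim_{n→∞} f_2(n)^(1/n)`
are the exponential growth rates of 1-convex and 2-convex permutations, then
`1.5349224995 ≤ C₁ ≤ 1.535014167` and `1.786373489 ≤ C₂ ≤ 1.786434384`. -/
theorem kconvex_growth_rate_bounds (C₁ C₂ : ℝ)
    (h₁ : Tendsto (fun n : ℕ => (fk 1 n : ℝ) ^ (1 / (n : ℝ))) atTop (nhds C₁))
    (h₂ : Tendsto (fun n : ℕ => (fk 2 n : ℝ) ^ (1 / (n : ℝ))) atTop (nhds C₂)) :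
    ((1.5349224995 : ℝ) ≤ C₁ ∧ C₁ ≤ (1.535014167 : ℝ)) ∧
    ((1.786373489 : ℝ) ≤ C₂ ∧ C₂ ≤ (1.786434384 : ℝ)) := by
  refine ⟨⟨?_, ?_⟩, ?_, ?_⟩
  · exact le_growthRate_of_eigenSeq le_rfl one_le_two (by norm_num) ⟨7, by norm_num [eigenSeq]⟩ h₁
  · refine growthRate_le_of_eigenSeq (M := 5) le_rfl one_le_two (by simp) (by norm_num)
      (fun p hp => ?_) (by norm_num [eigenSeq]) h₁
    interval_cases p <;> norm_num [eigenSeq]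
  · exact le_growthRate_of_eigenSeq one_le_two le_rfl (by norm_num) ⟨8, by norm_num [eigenSeq]⟩ h₂
  · refine growthRate_le_of_eigenSeq (M := 6) one_le_two le_rfl (by simp) (by norm_num)
      (fun p hp => ?_) (by norm_num [eigenSeq]) h₂
    interval_cases p <;> norm_num [eigenSeq]
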